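/- Let S be an addable abstract numeration system and let x ∈ {0,1}^ℕ be S-automatic. Then the set P_{111}(W(O(x))) ⊆ ℕ³ is S-recognizable, where P_{111}(W(O(x))) is the set of strictly increasing triples (a, b, c) such that the infinite word over ℕ having letter 1 exactly at positions a, b, c and letter 0 elsewhere belongs to the winning shift W(O(x)). -/

import Mathlib

open scoped BigOperators

/-- A language is regular if it is accepted by a DFA with finitely many states. -/
def IsRegularLang {α : Type*} (L : Set (List α)) : Prop :=
  ∃ (σ : Type) (_ : Fintype σ) (M : DFA α σ), ∀ w : List α, w ∈ M.accepts ↔ w ∈ L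

/-- Pad a word over `A` to length `M` by prepending the padding symbol `none`. -/
def padOne {A : Type*} (M : ℕ) (w : List A) : List (Option A) :=
  List.replicate (M - w.length) none ++ w.map some

/-- The padded form of a `d`-tuple of words over `A`, as a word over `(A ∪ {#})^d`. -/
def padTuple {A : Type*} {d : ℕ} (ws : Fin d → List A) : List (Fin d → Option A) :=
  List.ofFn fun j : Fin (Finset.univ.sup fun i : Fin d => (ws i).length) =>
    fun i : Fin d =>
      (padOne (Finset.univ.sup fun i : Fin d => (ws i).length) (ws i)).getD j.val none

/-- An abstract numeration system over the alphabet `A`, encoded by the order isomorphism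
`rep : ℕ → L ⊆ A*` enumerating its (infinite) language in increasing order. -/
structure ANS (A : Type*) where
  rep : ℕ → List A
  inj : Function.Injective rep

/-- A set `Y ⊆ ℕ^d` is `S`-recognizable if the padded representations of its members form
a regular language. -/
def ANS.Recognizable {A : Type*} (S : ANS A) {d : ℕ} (Y : Set (Fin d → ℕ)) : Prop :=
  IsRegularLang { w : List (Fin d → Option A) | ∃ t ∈ Y, w = padTuple fun i => S.rep (t i) }

/-- An ANS is addable if the graph of addition is `S`-recognizable. -/
def ANS.Addable {A : Type*} (S : ANS A) : Prop :=
  S.Recognizable { t : Fin 3 → ℕ | t 0 + t 1 = t 2 }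

/-- An ANS is comparable if the relation `≤` is `S`-recognizable. -/
def ANS.Comparable {A : Type*} (S : ANS A) : Prop :=
  S.Recognizable { t : Fin 2 → ℕ | t 0 ≤ t 1 }

/-- An ANS is regular if `ℕ` (i.e. its language) is `S`-recognizable. -/
def ANS.IsRegularANS {A : Type*} (S : ANS A) : Prop :=
  S.Recognizable (Set.univ : Set (Fin 1 → ℕ))

/-- The unary ANS, with language `0*` ordered by length. -/
def unaryANS : ANS Unit where
  rep := fun n => List.replicate n ()
  inj := fun m n h => by simpa using congrArg List.length h

/-- `x` is `S`-automatic: some DFAO outputs `x n` on input `rep_S n`. -/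
def SAutomatic {A C : Type*} (S : ANS A) (x : ℕ → C) : Prop :=
  ∃ (Q : Type) (_ : Fintype Q) (M : DFA A Q) (τ : Q → C),
    ∀ n : ℕ, τ (M.eval (S.rep n)) = x n

/-- The shift map on one-sided infinite words. -/
def shiftMap {C : Type*} (x : ℕ → C) : ℕ → C := fun n => x (n + 1)

/-- The orbit closure of `x` (closure in the product topology over the discrete alphabet):
`y` belongs to it iff every finite prefix of `y` occurs in `x`. -/
def orbitClosure {C : Type*} (x : ℕ → C) : Set (ℕ → C) :=
  { y | ∀ n : ℕ, ∃ m : ℕ, ∀ i < n, y i = x (m + i) }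

/-- A subshift: a shift-invariant subset of `C^ℕ` that is closed in the product topology
over the discrete alphabet (expressed combinatorially). -/
def IsSubshift {C : Type*} (X : Set (ℕ → C)) : Prop :=
  (∀ x ∈ X, shiftMap x ∈ X) ∧
  ∀ y : ℕ → C, (∀ n : ℕ, ∃ x ∈ X, ∀ i < n, y i = x i) → y ∈ X

/-- The language of a set of infinite words: all finite factors of its elements. -/
def LangOf {C : Type*} (X : Set (ℕ → C)) : Set (List C) :=
  { w | ∃ x ∈ X, ∃ p : ℕ, w = List.ofFn fun i : Fin w.length => x (p + i) }

/-- A word is right special in (the language of) `X` if it has two distinct one-letter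
extensions in the language of `X`. -/
def RightSpecial {C : Type*} (X : Set (ℕ → C)) (w : List C) : Prop :=
  ∃ a b : C, a ≠ b ∧ w ++ [a] ∈ LangOf X ∧ w ++ [b] ∈ LangOf X

/-- The factor complexity of `x`: the number of distinct factors of length `n`. -/
noncomputable def factorComplexity {C : Type*} (x : ℕ → C) (n : ℕ) : ℕ :=
  Set.ncard { w : List C | ∃ p : ℕ, w = List.ofFn fun i : Fin n => x (p + i) }

/-- `T` is a strategy tree witnessing `α ∈ W(X)`: a prefix-closed set of finite words
containing the empty word, in which every word of length `i` has exactly `α i + 1`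
one-letter extensions, and all whose infinite branches lie in `X`. -/
def IsStrategyTree {C : Type*} (X : Set (ℕ → C)) (α : ℕ → ℕ) (T : Set (List C)) : Prop :=
  ([] : List C) ∈ T ∧
  (∀ u v : List C, u ++ v ∈ T → u ∈ T) ∧
  (∀ w ∈ T, Set.ncard { c : C | w ++ [c] ∈ T } = α w.length + 1) ∧
  (∀ y : ℕ → C, (∀ n : ℕ, (List.ofFn fun i : Fin n => y i) ∈ T) → y ∈ X)

/-- The winning shift of `X ⊆ C^ℕ`, a subset of `ℕ^ℕ`. -/
def winningShift {C : Type*} (X : Set (ℕ → C)) : Set (ℕ → ℕ) :=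
  { α | ∃ T : Set (List C), IsStrategyTree X α T }

/-- Membership in the winning set of a set `X` of finite words, defined recursively:
`ε ∈ W(X)` iff `ε ∈ X`, and `a :: α ∈ W(X)` iff there is a set of `a + 1` letters `c`
such that `α` is in the winning set of the left quotient of `X` by `c`. -/
def winningSetMem {C : Type*} : List ℕ → Set (List C) → Prop
  | [], X => [] ∈ X
  | a :: α, X => ∃ S : Finset C, S.card = a + 1 ∧ ∀ c ∈ S, winningSetMem α { w | c :: w ∈ X }

/-- `Σ y = m`: the sum of the letters of `y ∈ ℕ^ℕ` is finite and equals `m`. -/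
def sumEq (y : ℕ → ℕ) (m : ℕ) : Prop :=
  (Function.support y).Finite ∧ ∑ᶠ i, y i = m

/-- `Y ⊆ ℕ^ℕ` has finite coding dimension: the sums `Σ y`, `y ∈ Y`, are uniformly bounded. -/
def FiniteCodingDim (Y : Set (ℕ → ℕ)) : Prop :=
  ∃ d : ℕ, ∀ y ∈ Y, ∀ F : Finset ℕ, ∑ i ∈ F, y i ≤ d

/-- The set `{ν(y) : y ∈ Y, Σy = k} ⊆ ℕᵏ`: nondecreasing `k`-tuples `t` such that the word
whose letter at `j` is the number of occurrences of `j` in `t` belongs to `Y`. -/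
def nuSet (Y : Set (ℕ → ℕ)) (k : ℕ) : Set (Fin k → ℕ) :=
  { t | Monotone t ∧ (fun j => Set.ncard { i : Fin k | t i = j }) ∈ Y }

/-- `Y ⊆ ℕ^ℕ` is weakly `S`-codable if `{ν(y) : y ∈ Y, Σy = k}` is `S`-recognizable for
every `k`. -/
def WeaklySCodable {A : Type*} (S : ANS A) (Y : Set (ℕ → ℕ)) : Prop :=
  ∀ k : ℕ, S.Recognizable (nuSet Y k)

/-- `Y ⊆ ℕ^ℕ` is `S`-codable if it is weakly `S`-codable and has finite coding dimension. -/
def SCodable {A : Type*} (S : ANS A) (Y : Set (ℕ → ℕ)) : Prop :=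
  WeaklySCodable S Y ∧ FiniteCodingDim Y

/-- `P_{111}(Y)`: strictly increasing triples `(a, b, c)` such that the word with letter `1`
exactly at positions `a`, `b`, `c` and `0` elsewhere belongs to `Y`. -/
def P111 (Y : Set (ℕ → ℕ)) : Set (Fin 3 → ℕ) :=
  { t | t 0 < t 1 ∧ t 1 < t 2 ∧
        (fun j => if j = t 0 ∨ j = t 1 ∨ j = t 2 then 1 else 0) ∈ Y }

/-- `P_v(Y)` for a finite word `v` over `ℕ`: strictly increasing tuples `n` such that the
word with letter `v i` at position `n i` and `0` elsewhere belongs to `Y`. -/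
def PvSet (v : List ℕ) (Y : Set (ℕ → ℕ)) : Set (Fin v.length → ℕ) :=
  { n | StrictMono n ∧
        (fun j => ∑ i : Fin v.length, if n i = j then v.get i else 0) ∈ Y }

/-- `X` is sofic: the set of label sequences of right-infinite paths in a finite
edge-labeled graph. -/
def IsSofic {C : Type*} (X : Set (ℕ → C)) : Prop :=
  ∃ (V : Type) (_ : Fintype V) (E : Set (V × C × V)),
    X = { x | ∃ p : ℕ → V, ∀ n : ℕ, (p n, x n, p (n + 1)) ∈ E }

/-- The factor `x[a..b-1]` of an infinite word. -/
def segmentOf {C : Type*} (x : ℕ → C) (a b : ℕ) : List C :=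
  List.ofFn fun i : Fin (b - a) => x (a + i)

/-- `U · V^ω`: infinite words that decompose as a word of `U` followed by infinitely many
nonempty words of `V`. -/
def omegaIter {C : Type*} (U V : Set (List C)) : Set (ℕ → C) :=
  { x | ∃ k : ℕ → ℕ, StrictMono k ∧ segmentOf x 0 (k 0) ∈ U ∧
        ∀ i : ℕ, segmentOf x (k i) (k (i + 1)) ∈ V }

/-- `X ⊆ C^ℕ` is ω-regular: a finite union of sets `U · V^ω` with `U`, `V` regular. -/
def IsOmegaRegular {C : Type*} (X : Set (ℕ → C)) : Prop :=
  ∃ (n : ℕ) (U V : Fin n → Set (List C)),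
    (∀ i, IsRegularLang (U i) ∧ IsRegularLang (V i)) ∧
    X = ⋃ i, omegaIter (U i) (V i)

/-- The words `p₁ = a`, `p_{k+1} = p_k bᵏ p_k` (with `a = false`, `b = true`). -/
def pWord : ℕ → List Bool
  | 0 => []
  | 1 => [false]
  | (k + 2) => pWord (k + 1) ++ List.replicate (k + 1) true ++ pWord (k + 1)

/-- Combinatorial continuity of `φ` on `Y` for product topologies over discrete alphabets:
every finite prefix of `φ y` is determined by a finite prefix of `y`. -/
def ContOn {B C : Type*} (φ : (ℕ → B) → (ℕ → C)) (Y : Set (ℕ → B)) : Prop :=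
  ∀ y ∈ Y, ∀ n : ℕ, ∃ m : ℕ, ∀ y' ∈ Y, (∀ i < m, y' i = y i) → ∀ i < n, φ y' i = φ y i

/-!
A sequence `α` lies in the winning shift `W(X)` if and only if there are words `y s ∈ X`, indexed by
the choice sequences `s ≤ α`, such that `y s` and `y s'` part exactly where `s` and `s'` do. If `α`
has finite support, with letter `v i` at position `t i`, then only finitely many words are involved,
one for each `k ≤ v`. For `X = O(x)` with `x` taking finitely many values, compactness allows one to
replace these words by factors of `x` of arbitrary length `N`, occurring at positions `p k`. Thus
`α ∈ W(O(x))` becomes a first-order statement about `t`, in terms of `+`, `<` and equality of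
letters of `x`. In an addable system the relations decided by finite automata include `+` and `<`
and are closed under first-order logic, and automaticity of `x` provides the rest.
-/

section RegularLanguages

variable {α β : Type*}

theorem isRegularLang_iff_isRegular {L : Language α} : IsRegularLang L ↔ L.IsRegular := by
  simp only [IsRegularLang, Language.IsRegular, Language.ext_iff]
  rfl

theorem isRegular_congr {L L' : Language α} (hL : L.IsRegular) (h : ∀ w, w ∈ L ↔ w ∈ L') :
    L'.IsRegular :=
  Language.ext h ▸ hL

theorem isRegular_forall {ι : Type*} [Finite ι] {L : ι → Language α}
    (hL : ∀ i, (L i).IsRegular) : Language.IsRegular {w : List α | ∀ i, w ∈ L i} := by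
  have hfin := Set.Finite.pi' fun i => (hL i).finite_range_leftQuotient
  refine .of_finite_range_leftQuotient
    ((hfin.image fun K : ι → Language α => {w | ∀ i, w ∈ K i}).subset ?_)
  rintro _ ⟨u, rfl⟩
  exact ⟨fun i => (L i).leftQuotient u, fun i => ⟨u, rfl⟩, rfl⟩

theorem isRegular_comap_map (f : α → β) {L : Language β} (hL : L.IsRegular) :
    Language.IsRegular {w : List α | w.map f ∈ L} := by
  obtain ⟨σ, hσ, M, rfl⟩ := hL
  exact ⟨σ, hσ, M.comap f, M.accepts_comap f⟩

theorem isRegular_comap_reduceOption {L : Language α} (hL : L.IsRegular) :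
    Language.IsRegular {w : List (Option α) | w.reduceOption ∈ L} := by
  refine .of_finite_range_leftQuotient ((hL.finite_range_leftQuotient.image
    fun K : Language α => ({w | w.reduceOption ∈ K} : Language (Option α))).subset ?_)
  rintro _ ⟨u, rfl⟩
  refine ⟨L.leftQuotient u.reduceOption, ⟨_, rfl⟩, ?_⟩
  ext w
  change u.reduceOption ++ w.reduceOption ∈ L ↔ (u ++ w).reduceOption ∈ L
  rw [List.reduceOption_append]

-- The quotient by `v` is determined by the set of quotients of `L` by the words `u` that are mapped
-- to `v` preceded by a run of `e`.
theorem isRegular_map_dropReplicate (f : α → β) (e : β) {L : Language α} (hL : L.IsRegular) :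
    Language.IsRegular {w : List β | ∃ u ∈ L, ∃ k, u.map f = List.replicate k e ++ w} := by
  refine .of_finite_range_leftQuotient ((hL.finite_range_leftQuotient.finite_subsets.image
    fun 𝒦 : Set (Language α) => ({w | ∃ K ∈ 𝒦, ∃ u ∈ K, u.map f = w} : Language β)).subset ?_)
  rintro _ ⟨v, rfl⟩
  refine ⟨L.leftQuotient '' {u | ∃ k, u.map f = List.replicate k e ++ v},
    Set.image_subset_range _ _, ?_⟩
  ext w
  constructor
  · rintro ⟨_, ⟨u, ⟨k, hu⟩, rfl⟩, u', hu', rfl⟩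
    exact ⟨u ++ u', hu', k, by simp [hu]⟩
  · rintro ⟨_, hu, k, hk⟩
    obtain ⟨u, u', rfl, hv, hw⟩ := List.map_eq_append_iff.1 (hk.trans (List.append_assoc ..).symm)
    exact ⟨_, ⟨u, ⟨k, hv⟩, rfl⟩, u', hu, hw⟩

end RegularLanguages

section DropLeading

variable {α : Type*}

open Classical in
/-- The word `w` with its leading run of the letter `e` removed; for the padding letter this undoes
padding. -/
noncomputable def dropLeading (e : α) (w : List α) : List α :=
  w.dropWhile fun a => a = e

theorem exists_eq_replicate_append_dropLeading (e : α) (w : List α) :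
    ∃ k, w = List.replicate k e ++ dropLeading e w := by
  classical
  have hrun := List.eq_replicate_of_mem (l := w.takeWhile fun a => a = e) (a := e)
    fun a ha => by simpa using List.mem_takeWhile_imp ha
  exact ⟨_, by rw [← hrun]; exact List.takeWhile_append_dropWhile.symm⟩

@[simp]
theorem dropLeading_replicate_append (e : α) (k : ℕ) (w : List α) :
    dropLeading e (List.replicate k e ++ w) = dropLeading e w :=
  List.dropWhile_append_of_pos (by simp)

@[simp]
theorem dropLeading_dropLeading (e : α) (w : List α) :
    dropLeading e (dropLeading e w) = dropLeading e w :=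
  List.dropWhile_idempotent _ _

theorem dropLeading_append_of_ne_nil {e : α} {u : List α} (hu : dropLeading e u ≠ []) (w : List α) :
    dropLeading e (u ++ w) = dropLeading e u ++ w := by
  rw [dropLeading, List.dropWhile_append, if_neg]
  · rfl
  · rwa [List.isEmpty_iff]

theorem dropLeading_eq_nil_iff {e : α} {w : List α} :
    dropLeading e w = [] ↔ ∃ k, w = List.replicate k e := by
  refine ⟨fun h => ?_, ?_⟩
  · obtain ⟨k, hk⟩ := exists_eq_replicate_append_dropLeading e w
    exact ⟨k, by simpa [h] using hk⟩
  · rintro ⟨k, rfl⟩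
    simp [dropLeading]

theorem dropLeading_none_map_some (u : List α) :
    dropLeading none (u.map some) = u.map some := by
  cases u <;> simp [dropLeading]

theorem isRegular_comap_dropLeading (e : α) {L : Language α} (hL : L.IsRegular) :
    Language.IsRegular {w : List α | dropLeading e w ∈ L} := by
  refine .of_finite_range_leftQuotient
    ((hL.finite_range_leftQuotient.insert {w | dropLeading e w ∈ L}).subset ?_)
  rintro _ ⟨u, rfl⟩
  by_cases hu : dropLeading e u = []
  · obtain ⟨k, rfl⟩ := dropLeading_eq_nil_iff.1 hu
    left
    ext w
    change dropLeading e (_ ++ w) ∈ L ↔ dropLeading e w ∈ L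
    rw [dropLeading_replicate_append]
  · right
    refine ⟨dropLeading e u, ?_⟩
    ext w
    change dropLeading e u ++ w ∈ L ↔ dropLeading e (u ++ w) ∈ L
    rw [dropLeading_append_of_ne_nil hu]

theorem dropLeading_eq_self_iff {e : α} {w : List α} :
    dropLeading e w = w ↔ w.head? ≠ some e := by
  rw [dropLeading, List.dropWhile_eq_self_iff]
  cases w <;> simp

theorem isRegular_dropLeading_eq_self (e : α) :
    Language.IsRegular {w : List α | dropLeading e w = w} := by
  refine .of_finite_range_leftQuotient
    ((Set.toFinite {({w | dropLeading e w = w} : Language α), ⊤, ⊥}).subset ?_)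
  rintro _ ⟨_ | ⟨a, u⟩, rfl⟩
  · exact .inl rfl
  · right
    by_cases ha : a = e
    · right
      ext w
      change dropLeading e (a :: u ++ w) = a :: u ++ w ↔ False
      simp [dropLeading_eq_self_iff, ha]
    · left
      ext w
      change dropLeading e (a :: u ++ w) = a :: u ++ w ↔ True
      simp [dropLeading_eq_self_iff, ha]

theorem word_ext_of_columns {V : Type*} {w w' : List (V → α)} (hlen : w.length = w'.length)
    (hcol : ∀ v, w.map (· v) = w'.map (· v)) : w = w' := by
  refine List.ext_getElem hlen fun i hi hi' => funext fun v => ?_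
  simpa [hi, hi'] using congrArg (·[i]?) (hcol v)

theorem exists_word_of_columns {V : Type*} {n : ℕ} (col : V → List α)
    (hlen : ∀ v, (col v).length = n) :
    ∃ w : List (V → α), w.length = n ∧ ∀ v, w.map (· v) = col v :=
  ⟨List.ofFn fun (i : Fin n) v => (col v)[i]'(by simp [hlen]), by simp,
    fun v => List.ext_getElem (by simp [hlen]) (by simp)⟩

theorem dropLeading_eq_of_columns {V : Type*} (e : V → α) {w w' : List (V → α)}
    (hcol : ∀ v, dropLeading (e v) (w.map (· v)) = dropLeading (e v) (w'.map (· v))) :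
    dropLeading e w = dropLeading e w' := by
  wlog hlen : w.length ≤ w'.length generalizing w w'
  · exact (this (fun v => (hcol v).symm) (Nat.le_of_not_ge hlen)).symm
  suffices hw' : w' = List.replicate (w'.length - w.length) e ++ w by
    rw [hw', dropLeading_replicate_append]
  refine word_ext_of_columns (by simp [hlen]) fun v => ?_
  obtain ⟨k, hk⟩ := exists_eq_replicate_append_dropLeading (e v) (w.map (· v))
  obtain ⟨k', hk'⟩ := exists_eq_replicate_append_dropLeading (e v) (w'.map (· v))
  have hkk' : k' = w'.length - w.length + k := by
    have := congrArg List.length hk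
    have := congrArg List.length hk'
    simp only [List.length_map, List.length_append, List.length_replicate, hcol v] at *
    omega
  rw [hk', List.map_append, List.map_replicate, hk, hkk', ← hcol v,
    List.replicate_add, List.append_assoc]

theorem dropLeading_eq_self_of_column {V : Type*} {e : V → α} {w : List (V → α)} (v : V)
    (hv : dropLeading (e v) (w.map (· v)) = w.map (· v)) : dropLeading e w = w := by
  rw [dropLeading_eq_self_iff] at hv ⊢
  contrapose! hv
  simp [hv]

end DropLeading

section PadTuple

variable {A : Type*} {d : ℕ}

theorem length_padOne {M : ℕ} {w : List A} (h : w.length ≤ M) : (padOne M w).length = M := by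
  simp [padOne, h]

@[simp]
theorem dropLeading_padOne (M : ℕ) (w : List A) : dropLeading none (padOne M w) = w.map some := by
  rw [padOne, dropLeading_replicate_append, dropLeading_none_map_some]

theorem map_padTuple (ws : Fin d → List A) (i : Fin d) :
    (padTuple ws).map (· i) = padOne (Finset.univ.sup fun i => (ws i).length) (ws i) := by
  have hlen := length_padOne (Finset.le_sup (f := fun i => (ws i).length) (Finset.mem_univ i))
  refine List.ext_getElem (by simp [padTuple, hlen]) fun j _ hj => ?_
  simp [padTuple, hj]

theorem dropLeading_padTuple (ws : Fin d → List A) :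
    dropLeading (fun _ => none) (padTuple ws) = padTuple ws := by
  obtain hd | hd := isEmpty_or_nonempty (Fin d)
  · simp [padTuple, dropLeading]
  · obtain ⟨i, -, hi⟩ :=
      Finset.exists_mem_eq_sup Finset.univ Finset.univ_nonempty fun i => (ws i).length
    have hcol : (padTuple ws).map (· i) = (ws i).map some := by simp [map_padTuple, padOne, hi]
    exact dropLeading_eq_self_of_column i (by rw [hcol, dropLeading_none_map_some])

end PadTuple

namespace ANS

variable {A V W : Type*} {S : ANS A} {d : ℕ}

/-- The word `w` over `(A ∪ {#})^V` represents the tuple `t`. Unlike in `padTuple`, the columns may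
all start with padding symbols, so that words can be lengthened to make room for the
representation of a further number. -/
def IsPadded (S : ANS A) (w : List (V → Option A)) (t : V → ℕ) : Prop :=
  ∀ v, dropLeading none (w.map (· v)) = (S.rep (t v)).map some

theorem isPadded_padTuple (S : ANS A) (t : Fin d → ℕ) :
    S.IsPadded (padTuple fun i => S.rep (t i)) t := fun i => by
  rw [map_padTuple, dropLeading_padOne]

theorem IsPadded.dropLeading_eq {w : List (Fin d → Option A)} {t : Fin d → ℕ}
    (hw : S.IsPadded w t) :
    dropLeading (fun _ => none) w = padTuple fun i => S.rep (t i) := by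
  rw [← dropLeading_padTuple]
  exact dropLeading_eq_of_columns _ fun i => (hw i).trans (S.isPadded_padTuple t i).symm

theorem IsPadded.unique {w : List (V → Option A)} {t t' : V → ℕ} (hw : S.IsPadded w t)
    (hw' : S.IsPadded w t') : t = t' :=
  funext fun v => S.inj (List.map_injective_iff.2 (Option.some_injective A)
    ((hw v).symm.trans (hw' v)))

theorem IsPadded.reduceOption_map {w : List (V → Option A)} {t : V → ℕ} (hw : S.IsPadded w t)
    (v : V) : (w.map (· v)).reduceOption = S.rep (t v) := by
  obtain ⟨k, hk⟩ := exists_eq_replicate_append_dropLeading none (w.map (· v))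
  rw [hk, hw v, List.reduceOption_append, List.reduceOption_replicate_none, List.nil_append]
  simp [List.reduceOption, List.filterMap_map]

theorem IsPadded.exists_sum_extension {κ : Type*} [Finite κ] {w : List (V → Option A)} {t : V → ℕ}
    (hw : S.IsPadded w t) (s : κ → ℕ) :
    ∃ u : List (V ⊕ κ → Option A), S.IsPadded u (Sum.elim t s) ∧
      ∃ k, u.map (· ∘ Sum.inl) = List.replicate k (fun _ => none) ++ w := by
  obtain ⟨M, hM⟩ := (Set.finite_range fun i => (S.rep (s i)).length).bddAbove
  let N := max M w.length
  have hMN (i : κ) : (S.rep (s i)).length ≤ N := (hM ⟨i, rfl⟩).trans (le_max_left _ _)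
  obtain ⟨u, hlen, hcol⟩ := exists_word_of_columns (n := N)
    (Sum.elim (fun v => List.replicate (N - w.length) none ++ w.map (· v))
      fun i => padOne N (S.rep (s i)))
    (by rintro (v | i) <;> simp [length_padOne, hMN, N])
  refine ⟨u, ?_, N - w.length, word_ext_of_columns (by simp [hlen, N]) fun v => ?_⟩
  · rintro (v | i) <;> rw [hcol]
    · exact (dropLeading_replicate_append ..).trans (hw v)
    · exact dropLeading_padOne ..
  · simpa [Function.comp_def] using hcol (.inl v)

/-- The relation `P` on `ℕ` is decided by a finite automaton reading padded representations of its
arguments. The variables are indexed by any type `V`, and words that represent no tuple are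
disregarded. -/
def Definable (S : ANS A) (P : (V → ℕ) → Prop) : Prop :=
  ∃ L : Language (V → Option A), L.IsRegular ∧ ∀ w t, S.IsPadded w t → (w ∈ L ↔ P t)

theorem Recognizable.definable {Y : Set (Fin d → ℕ)} (hY : S.Recognizable Y) :
    S.Definable (· ∈ Y) := by
  refine ⟨_, isRegular_comap_dropLeading (fun _ => none) (isRegularLang_iff_isRegular.1 hY),
    fun w t hw => ?_⟩
  change (∃ t' ∈ Y, dropLeading _ w = padTuple fun i => S.rep (t' i)) ↔ t ∈ Y
  refine ⟨?_, fun ht => ⟨t, ht, hw.dropLeading_eq⟩⟩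
  rintro ⟨t', ht', hw'⟩
  have hpad : S.IsPadded (padTuple fun i => S.rep (t i)) t' := by
    rw [← hw.dropLeading_eq, hw']
    exact S.isPadded_padTuple t'
  rwa [(S.isPadded_padTuple t).unique hpad]

theorem Recognizable.isRegular_column {Y : Set (Fin d → ℕ)} (hY : S.Recognizable Y) (i : Fin d) :
    Language.IsRegular {w : List (Option A) | ∃ t ∈ Y,
      dropLeading none w = (S.rep (t i)).map some} := by
  refine isRegular_congr (isRegular_comap_dropLeading none (isRegular_map_dropReplicate (· i) none
    (isRegularLang_iff_isRegular.1 hY))) fun w => ⟨?_, ?_⟩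
  · rintro ⟨_, ⟨t, ht, rfl⟩, k, hk⟩
    refine ⟨t, ht, ?_⟩
    rw [← S.isPadded_padTuple t i, hk, dropLeading_replicate_append, dropLeading_dropLeading]
  · rintro ⟨t, ht, hw⟩
    exact ⟨_, ⟨t, ht, rfl⟩, _, by rw [map_padTuple, hw]; rfl⟩

theorem Addable.isRegular_exists_isPadded [Finite V] (hadd : S.Addable) :
    Language.IsRegular {w : List (V → Option A) | ∃ t, S.IsPadded w t} := by
  refine isRegular_congr (isRegular_forall fun v : V => isRegular_comap_map
    (fun a : V → Option A => a v) (hadd.isRegular_column 1)) fun w => ⟨fun hw => ?_, ?_⟩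
  · exact ⟨fun v => (hw v).choose 1, fun v => (hw v).choose_spec.2⟩
  · rintro ⟨t, ht⟩ v
    exact ⟨![0, t v, t v], Nat.zero_add _, ht v⟩

theorem Definable.recognizable (hadd : S.Addable) {Y : Set (Fin d → ℕ)}
    (hY : S.Definable (· ∈ Y)) : S.Recognizable Y := by
  obtain ⟨L, hL, hLY⟩ := hY
  refine isRegularLang_iff_isRegular.2 (isRegular_congr ((hL.inf
    hadd.isRegular_exists_isPadded).inf (isRegular_dropLeading_eq_self fun _ => none))
    fun w => ⟨?_, ?_⟩)
  · rintro ⟨⟨hw, t, ht⟩, hdrop⟩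
    exact ⟨t, (hLY w t ht).1 hw, Eq.trans (Eq.symm hdrop) ht.dropLeading_eq⟩
  · rintro ⟨t, ht, rfl⟩
    have hpad := S.isPadded_padTuple t
    exact ⟨⟨(hLY _ t hpad).2 ht, t, hpad⟩, dropLeading_padTuple _⟩

namespace Definable

variable {P Q : (V → ℕ) → Prop}

theorem congr (hP : S.Definable P) (h : ∀ t, P t ↔ Q t) : S.Definable Q :=
  (funext fun t => propext (h t) : P = Q) ▸ hP

theorem not (hP : S.Definable P) : S.Definable fun t => ¬ P t := by
  obtain ⟨L, hL, hLP⟩ := hP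
  exact ⟨Lᶜ, hL.compl, fun w t hw => (hLP w t hw).not⟩

theorem forall_finite {ι : Type*} [Finite ι] {P : ι → (V → ℕ) → Prop}
    (hP : ∀ i, S.Definable (P i)) : S.Definable fun t => ∀ i, P i t := by
  choose L hL hLP using hP
  exact ⟨_, isRegular_forall hL, fun w t hw => forall_congr' fun i => hLP i w t hw⟩

theorem and (hP : S.Definable P) (hQ : S.Definable Q) : S.Definable fun t => P t ∧ Q t :=
  (forall_finite (Bool.forall_bool.2 ⟨hP, hQ⟩ : ∀ b : Bool, S.Definable (b.rec P Q))).congr fun _ =>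
    Bool.forall_bool

theorem imp (hP : S.Definable P) (hQ : S.Definable Q) : S.Definable fun t => P t → Q t :=
  (hP.and hQ.not).not.congr fun _ => by tauto

theorem iff (hP : S.Definable P) (hQ : S.Definable Q) : S.Definable fun t => P t ↔ Q t :=
  ((hP.imp hQ).and (hQ.imp hP)).congr fun _ => iff_iff_implies_and_implies.symm

theorem const (S : ANS A) (p : Prop) : S.Definable fun _ : V → ℕ => p := by
  by_cases hp : p
  · exact (forall_finite (ι := Empty) (P := nofun) nofun).congr fun _ => by simp [hp]
  · exact (forall_finite (ι := Empty) (P := nofun) nofun).not.congr fun _ => by simp [hp]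

theorem comp {P : (W → ℕ) → Prop} (hP : S.Definable P) (g : W → V) :
    S.Definable fun t : V → ℕ => P fun i => t (g i) := by
  obtain ⟨L, hL, hLP⟩ := hP
  refine ⟨_, isRegular_comap_map (· ∘ g) hL, fun w t hw => hLP _ _ fun i => ?_⟩
  rw [List.map_map]
  exact hw (g i)

theorem exists_tuple (hadd : S.Addable) {κ : Type*} [Finite κ] {P : (V → ℕ) → (κ → ℕ) → Prop}
    (hP : S.Definable fun t : V ⊕ κ → ℕ => P (fun v => t (.inl v)) fun i => t (.inr i)) :
    S.Definable fun t => ∃ s, P t s := by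
  obtain ⟨L, hL, hLP⟩ := hP
  have hvalid := isRegular_comap_map (· ∘ Sum.inr)
    (hadd.isRegular_exists_isPadded (V := κ)) (α := V ⊕ κ → Option A)
  refine ⟨_, isRegular_map_dropReplicate (· ∘ Sum.inl) (fun _ => none) (hL.inf hvalid),
    fun w t hw => ⟨?_, ?_⟩⟩
  · rintro ⟨u, ⟨hu, s, hs⟩, k, hk⟩
    refine ⟨s, (hLP u (Sum.elim t s) ?_).1 hu⟩
    rintro (v | i)
    · have hcol : u.map (· (.inl v)) = List.replicate k none ++ w.map (· v) := by
        simpa [Function.comp_def] using congrArg (List.map (· v)) hk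
      rw [hcol, dropLeading_replicate_append]
      exact hw v
    · simpa [Function.comp_def] using hs i
  · rintro ⟨s, hs⟩
    obtain ⟨u, hu, k, hk⟩ := hw.exists_sum_extension s
    refine ⟨u, ⟨(hLP u _ hu).2 hs, s, fun i => ?_⟩, k, hk⟩
    simpa [Function.comp_def] using hu (.inr i)

theorem exists_nat (hadd : S.Addable) {P : (V → ℕ) → ℕ → Prop}
    (hP : S.Definable fun t : V ⊕ Unit → ℕ => P (fun v => t (.inl v)) (t (.inr ()))) :
    S.Definable fun t => ∃ n, P t n :=
  (exists_tuple hadd (P := fun t s => P t (s ())) hP).congr fun _ =>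
    ⟨fun ⟨s, hs⟩ => ⟨s (), hs⟩, fun ⟨n, hn⟩ => ⟨fun _ => n, hn⟩⟩

theorem forall_nat (hadd : S.Addable) {P : (V → ℕ) → ℕ → Prop}
    (hP : S.Definable fun t : V ⊕ Unit → ℕ => P (fun v => t (.inl v)) (t (.inr ()))) :
    S.Definable fun t => ∀ n, P t n :=
  (exists_nat hadd hP.not).not.congr fun _ => not_exists_not

end Definable

theorem Addable.definable_add (hadd : S.Addable) (a b c : V) :
    S.Definable fun t => t a + t b = t c :=
  hadd.definable.comp ![a, b, c]

theorem Addable.definable_le (hadd : S.Addable) (a b : V) : S.Definable fun t => t a ≤ t b :=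
  (Definable.exists_nat hadd (P := fun t n => t a + n = t b) (hadd.definable_add _ _ _)).congr
    fun _ => by simp only [le_iff_exists_add, eq_comm]

theorem Addable.definable_lt (hadd : S.Addable) (a b : V) : S.Definable fun t => t a < t b :=
  (hadd.definable_le b a).not.congr fun _ => not_le

theorem Addable.definable_eq (hadd : S.Addable) (a b : V) : S.Definable fun t => t a = t b :=
  ((hadd.definable_le a b).and (hadd.definable_le b a)).congr fun _ => le_antisymm_iff.symm

theorem definable_rep_mem (S : ANS A) {L : Language A} (hL : L.IsRegular) (a : V) :
    S.Definable fun t => S.rep (t a) ∈ L := by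
  refine ⟨_, isRegular_comap_map (· a) (isRegular_comap_reduceOption hL), fun w t hw => ?_⟩
  change (w.map (· a)).reduceOption ∈ L ↔ _
  rw [hw.reduceOption_map]

end ANS

namespace SAutomatic

variable {A C V : Type*} {S : ANS A} {x : ℕ → C}

theorem finite_range (hx : SAutomatic S x) : (Set.range x).Finite := by
  obtain ⟨Q, _, M, τ, hτ⟩ := hx
  refine (Set.finite_range τ).subset ?_
  rintro _ ⟨n, rfl⟩
  exact ⟨_, hτ n⟩

theorem definable_apply_eq_apply (hx : SAutomatic S x) (a b : V) :
    S.Definable fun t => x (t a) = x (t b) := by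
  obtain ⟨Q, _, M, τ, hτ⟩ := hx
  have heval (F : Set Q) (c : V) : S.Definable fun t => M.eval (S.rep (t c)) ∈ F :=
    S.definable_rep_mem ⟨Q, ‹_›, { M with accept := F }, rfl⟩ c
  refine (ANS.Definable.forall_finite fun q : Q =>
    (heval {q} a).imp (heval {r | τ q = τ r} b)).congr fun t => ?_
  simp [hτ]

theorem definable_apply_add_eq_apply_add (hx : SAutomatic S x) (hadd : S.Addable) (a b c : V) :
    S.Definable fun t => x (t a + t c) = x (t b + t c) := by
  refine (ANS.Definable.exists_tuple hadd (κ := Bool)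
    (P := fun t s => (t a + t c = s false ∧ t b + t c = s true) ∧ x (s false) = x (s true))
    (((hadd.definable_add _ _ _).and (hadd.definable_add _ _ _)).and
      (hx.definable_apply_eq_apply _ _))).congr fun t => ⟨?_, fun h => ?_⟩
  · rintro ⟨s, ⟨ha, hb⟩, h⟩
    rwa [ha, hb]
  · exact ⟨fun i => bif i then t b + t c else t a + t c, ⟨rfl, rfl⟩, h⟩

end SAutomatic

section WinningShift

variable {C : Type*} {X : Set (ℕ → C)} {α : ℕ → ℕ}

/-- The words `y s` are the branches of a tree whose nodes at depth `n` have `α n + 1` children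
each: `s ≤ α` records which child is chosen at every depth. The words `y s` for other `s` are
irrelevant. -/
def IsBranchFamily (α : ℕ → ℕ) (y : (ℕ → ℕ) → ℕ → C) : Prop :=
  ∀ s ≤ α, ∀ s' ≤ α, ∀ n, (∀ i < n, s i = s' i) → (y s n = y s' n ↔ s n = s' n)

theorem IsBranchFamily.forall_lt_apply_eq_iff {y : (ℕ → ℕ) → ℕ → C} (hy : IsBranchFamily α y)
    {s s' : ℕ → ℕ} (hs : s ≤ α) (hs' : s' ≤ α) {n : ℕ} :
    (∀ i < n, y s i = y s' i) ↔ ∀ i < n, s i = s' i := by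
  refine ⟨fun h i => ?_, fun h i hi => (hy s hs s' hs' i fun j hj => h j (hj.trans hi)).2 (h i hi)⟩
  induction i using Nat.strong_induction_on with
  | h i ih => exact fun hi => (hy s hs s' hs' i fun j hj => ih j hj (hj.trans hi)).1 (h i hi)

theorem map_range_eq_map_range_iff {y z : ℕ → C} {m n : ℕ} :
    (List.range m).map y = (List.range n).map z ↔ m = n ∧ ∀ i < n, y i = z i := by
  constructor
  · intro h
    obtain rfl : m = n := by simpa using congrArg List.length h
    exact ⟨rfl, by simpa using h⟩
  · rintro ⟨rfl, h⟩
    simpa using h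

theorem ofFn_eq_map_range (y : ℕ → C) (n : ℕ) :
    (List.ofFn fun i : Fin n => y i) = (List.range n).map y :=
  List.ext_getElem (by simp) (by simp)

theorem map_range_succ (y : ℕ → C) (n : ℕ) :
    (List.range (n + 1)).map y = (List.range n).map y ++ [y n] := by
  rw [List.range_succ, List.map_append, List.map_singleton]

/-- The finite prefixes of the words `y s` with `s ≤ α`. -/
def branchTree (α : ℕ → ℕ) (y : (ℕ → ℕ) → ℕ → C) : Set (List C) :=
  {w | ∃ s ≤ α, ∃ n, (List.range n).map (y s) = w}

theorem map_range_mem_branchTree_iff {y : (ℕ → ℕ) → ℕ → C} {z : ℕ → C} {n : ℕ} :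
    (List.range n).map z ∈ branchTree α y ↔ ∃ s ≤ α, ∀ i < n, y s i = z i := by
  simp [branchTree, map_range_eq_map_range_iff]

theorem IsBranchFamily.successors_eq {y : (ℕ → ℕ) → ℕ → C} (hy : IsBranchFamily α y)
    {s : ℕ → ℕ} (hs : s ≤ α) (n : ℕ) :
    {c | (List.range n).map (y s) ++ [c] ∈ branchTree α y} =
      (fun m => y (Function.update s n m) n) '' Set.Iic (α n) := by
  have hupdate {m : ℕ} (hm : m ≤ α n) : Function.update s n m ≤ α :=
    update_le_iff.2 ⟨hm, fun i _ => hs i⟩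
  have hbelow (m : ℕ) : ∀ i < n, Function.update s n m i = s i := fun i hi =>
    Function.update_of_ne hi.ne _ _
  ext c
  constructor
  · rintro ⟨s', hs', k, hk⟩
    obtain rfl : k = n + 1 := by simpa using congrArg List.length hk
    rw [map_range_succ, List.append_singleton_inj, map_range_eq_map_range_iff] at hk
    obtain ⟨⟨-, hsame⟩, rfl⟩ := hk
    have hagree := (hy.forall_lt_apply_eq_iff hs' hs).1 hsame
    refine ⟨s' n, hs' n, (hy _ (hupdate (hs' n)) _ hs' n fun i hi => ?_).2 (by simp)⟩
    rw [hbelow _ i hi, hagree i hi]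
  · rintro ⟨m, hm, rfl⟩
    refine ⟨_, hupdate hm, n + 1, ?_⟩
    rw [map_range_succ, List.append_singleton_inj, map_range_eq_map_range_iff]
    exact ⟨⟨rfl, (hy.forall_lt_apply_eq_iff (hupdate hm) hs).2 (hbelow m)⟩, rfl⟩

theorem IsBranchFamily.ncard_successors {y : (ℕ → ℕ) → ℕ → C} (hy : IsBranchFamily α y)
    {s : ℕ → ℕ} (hs : s ≤ α) (n : ℕ) :
    {c | (List.range n).map (y s) ++ [c] ∈ branchTree α y}.ncard = α n + 1 := by
  rw [hy.successors_eq hs, Set.InjOn.ncard_image]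
  · simp [Set.ncard_eq_toFinset_card']
  · intro m hm m' hm' h
    have hupdate {m : ℕ} (hm : m ≤ α n) : Function.update s n m ≤ α :=
      update_le_iff.2 ⟨hm, fun i _ => hs i⟩
    simpa using (hy _ (hupdate hm) _ (hupdate hm') n
      fun i hi => by simp [Function.update_of_ne hi.ne]).1 h

/-- An infinite branch follows the diagonal choice sequence: its `i`-th choice is read off a prefix
of length `i + 1`. -/
theorem IsBranchFamily.exists_eq_of_forall_map_range_mem {y : (ℕ → ℕ) → ℕ → C}
    (hy : IsBranchFamily α y) {z : ℕ → C} (hz : ∀ n, (List.range n).map z ∈ branchTree α y) :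
    ∃ s ≤ α, y s = z := by
  simp only [map_range_mem_branchTree_iff] at hz
  choose s hs hsz using hz
  have hdiag (n i : ℕ) (hi : i < n) : s (i + 1) i = s n i := by
    refine (hy.forall_lt_apply_eq_iff (hs (i + 1)) (hs n)).1 (fun j hj => ?_) i i.lt_succ_self
    rw [hsz _ j hj, hsz n j (by omega)]
  refine ⟨fun i => s (i + 1) i, fun i => hs _ i, funext fun n => ?_⟩
  rw [← hsz (n + 1) n n.lt_succ_self]
  exact (hy.forall_lt_apply_eq_iff (fun i => hs _ i) (hs _)).2 (hdiag (n + 1)) n n.lt_succ_self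

theorem IsBranchFamily.isStrategyTree {y : (ℕ → ℕ) → ℕ → C} (hy : IsBranchFamily α y)
    (hX : ∀ s ≤ α, y s ∈ X) : IsStrategyTree X α (branchTree α y) := by
  refine ⟨⟨0, fun _ => Nat.zero_le _, 0, rfl⟩, ?_, ?_, fun z hz => ?_⟩
  · rintro u v ⟨s, hs, n, h⟩
    refine ⟨s, hs, min u.length n, ?_⟩
    rw [← List.take_range, List.map_take, h, List.take_left]
  · rintro _ ⟨s, hs, n, rfl⟩
    rw [hy.ncard_successors hs, List.length_map, List.length_range]
  · obtain ⟨s, hs, rfl⟩ := hy.exists_eq_of_forall_map_range_mem fun n =>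
      ofFn_eq_map_range z n ▸ hz n
    exact hX s hs

/-- The word of length `n` obtained by letting the choice `m` at a word `w` append `f w m`. -/
def playPrefix (f : List C → ℕ → C) (s : ℕ → ℕ) : ℕ → List C
  | 0 => []
  | n + 1 => playPrefix f s n ++ [f (playPrefix f s n) (s n)]

theorem playPrefix_eq_map_range (f : List C → ℕ → C) (s : ℕ → ℕ) (n : ℕ) :
    playPrefix f s n = (List.range n).map fun i => f (playPrefix f s i) (s i) := by
  induction n with
  | zero => rfl
  | succ n ih => rw [map_range_succ, ← ih, playPrefix]

@[simp]
theorem length_playPrefix (f : List C → ℕ → C) (s : ℕ → ℕ) (n : ℕ) :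
    (playPrefix f s n).length = n := by
  rw [playPrefix_eq_map_range, List.length_map, List.length_range]

theorem playPrefix_congr (f : List C → ℕ → C) {s s' : ℕ → ℕ} {n : ℕ} (h : ∀ i < n, s i = s' i) :
    playPrefix f s n = playPrefix f s' n := by
  induction n with
  | zero => rfl
  | succ n ih =>
    rw [playPrefix, playPrefix, ih fun i hi => h i (hi.trans n.lt_succ_self), h n n.lt_succ_self]

theorem IsStrategyTree.exists_choice {T : Set (List C)} (hT : IsStrategyTree X α T) :
    ∃ f : List C → ℕ → C, ∀ w ∈ T, Set.InjOn (f w) (Set.Iic (α w.length)) ∧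
      ∀ m ≤ α w.length, w ++ [f w m] ∈ T := by
  obtain ⟨hnil, -, hcard, -⟩ := hT
  obtain ⟨c, -⟩ : {c | [] ++ [c] ∈ T}.Nonempty :=
    Set.nonempty_of_ncard_ne_zero (by rw [hcard [] hnil]; omega)
  have : Nonempty C := ⟨c⟩
  have hchoice (w : List C) (hw : w ∈ T) : ∃ g : ℕ → C, Set.InjOn g (Set.Iic (α w.length)) ∧
      ∀ m ≤ α w.length, w ++ [g m] ∈ T := by
    have hfin : {c | w ++ [c] ∈ T}.Finite :=
      Set.finite_of_ncard_pos (by rw [hcard w hw]; omega)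
    obtain ⟨g, hg, hinj⟩ := (Set.finite_Iic (α w.length)).exists_injOn_of_encard_le
      (t := {c | w ++ [c] ∈ T}) (by
        rw [← hfin.cast_ncard_eq, hcard w hw, ← (Set.finite_Iic _).cast_ncard_eq]
        simp [Set.ncard_eq_toFinset_card'])
    exact ⟨g, hinj, hg⟩
  choose! f hf using hchoice
  exact ⟨f, hf⟩

theorem IsStrategyTree.exists_isBranchFamily {T : Set (List C)} (hT : IsStrategyTree X α T) :
    ∃ y, IsBranchFamily α y ∧ ∀ s ≤ α, y s ∈ X := by
  obtain ⟨f, hf⟩ := hT.exists_choice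
  have hmem {s : ℕ → ℕ} (hs : s ≤ α) (n : ℕ) : playPrefix f s n ∈ T := by
    induction n with
    | zero => exact hT.1
    | succ n ih => exact (hf _ ih).2 _ (by simpa using hs n)
  refine ⟨fun s n => f (playPrefix f s n) (s n), fun s hs s' hs' n h => ?_, fun s hs => ?_⟩
  · dsimp only
    rw [playPrefix_congr f h]
    exact (hf _ (hmem hs' n)).1.eq_iff (by simpa using hs n) (by simpa using hs' n)
  · refine hT.2.2.2 _ fun n => ?_
    rw [ofFn_eq_map_range fun i => f (playPrefix f s i) (s i), ← playPrefix_eq_map_range]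
    exact hmem hs n

theorem mem_winningShift_iff :
    α ∈ winningShift X ↔ ∃ y, IsBranchFamily α y ∧ ∀ s ≤ α, y s ∈ X :=
  ⟨fun ⟨_, hT⟩ => hT.exists_isBranchFamily, fun ⟨_, hy, hX⟩ => ⟨_, hy.isStrategyTree hX⟩⟩

end WinningShift

section Scatter

variable {ι C : Type*}

theorem finite_Iic_of_pi_nat [Finite ι] (v : ι → ℕ) : (Set.Iic v).Finite :=
  (Set.Finite.pi' fun i => Set.finite_Iic (v i)).subset fun _ h i => h i

/-- The letters `f k` played at depth `n` under the choices `k ≤ v` made at the depths `t i`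
distinguish exactly those choices that are made at depth `n`, once the earlier choices are
fixed. -/
def SplitsAt (t v : ι → ℕ) (n : ℕ) (f : Set.Iic v → C) : Prop :=
  ∀ k k' : Set.Iic v, (∀ i, t i < n → k.1 i = k'.1 i) →
    (f k = f k' ↔ ∀ i, t i = n → k.1 i = k'.1 i)

variable [Fintype ι] {t v : ι → ℕ}

/-- The word over `ℕ` with letter `v i` at position `t i` and letter `0` elsewhere, provided that
`t` is injective. -/
def scatter (t v : ι → ℕ) : ℕ → ℕ :=
  fun n => ∑ i, if t i = n then v i else 0

theorem scatter_apply (ht : Function.Injective t) (v : ι → ℕ) (i : ι) :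
    scatter t v (t i) = v i := by
  classical
  simp [scatter, ht.eq_iff]

theorem scatter_mono (t : ι → ℕ) : Monotone (scatter t) := fun _ _ h n =>
  Finset.sum_le_sum fun i _ => by split_ifs <;> simp [h i]

theorem apply_eq_apply_iff_of_le_scatter {s s' : ℕ → ℕ} (hs : s ≤ scatter t v)
    (hs' : s' ≤ scatter t v) {n : ℕ} : s n = s' n ↔ ∀ i, t i = n → s (t i) = s' (t i) := by
  refine ⟨fun h i hi => hi ▸ h, fun h => ?_⟩
  by_cases hn : ∃ i, t i = n
  · obtain ⟨i, rfl⟩ := hn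
    exact h i rfl
  · have hzero : scatter t v n = 0 := Finset.sum_eq_zero fun i _ => if_neg fun hi => hn ⟨i, hi⟩
    rw [Nat.le_zero.1 (hzero ▸ hs n : s n ≤ 0), Nat.le_zero.1 (hzero ▸ hs' n : s' n ≤ 0)]

theorem IsBranchFamily.splitsAt (ht : Function.Injective t) {y : (ℕ → ℕ) → ℕ → C}
    (hy : IsBranchFamily (scatter t v) y) (n : ℕ) :
    SplitsAt t v n fun k => y (scatter t k) n := by
  have heq (k k' : Set.Iic v) (n : ℕ) :
      scatter t k n = scatter t k' n ↔ ∀ i, t i = n → k.1 i = k'.1 i := by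
    simp only [apply_eq_apply_iff_of_le_scatter (scatter_mono t k.2) (scatter_mono t k'.2),
      scatter_apply ht]
  refine fun k k' hbelow => (hy _ (scatter_mono t k.2) _ (scatter_mono t k'.2) n
    fun m hm => ?_).trans (heq k k' n)
  exact (heq k k' m).2 fun i hi => hbelow i (hi ▸ hm)

theorem isBranchFamily_of_splitsAt (ht : Function.Injective t) {y : Set.Iic v → ℕ → C}
    (hy : ∀ n, SplitsAt t v n fun k => y k n) :
    IsBranchFamily (scatter t v) fun s => y ⟨(s ∘ t) ⊓ v, Set.mem_Iic.2 inf_le_right⟩ := by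
  intro s hs s' hs' n hbelow
  have hmin {s : ℕ → ℕ} (hs : s ≤ scatter t v) (i : ι) : min (s (t i)) (v i) = s (t i) :=
    min_eq_left (scatter_apply ht v i ▸ hs (t i))
  rw [apply_eq_apply_iff_of_le_scatter hs hs']
  refine (hy n _ _ fun i hi => ?_).trans ?_
  · simpa [hmin hs, hmin hs'] using hbelow _ hi
  · simp [hmin hs, hmin hs']

theorem scatter_mem_winningShift_iff (ht : Function.Injective t) {X : Set (ℕ → C)} :
    scatter t v ∈ winningShift X ↔
      ∃ y : Set.Iic v → ℕ → C, (∀ k, y k ∈ X) ∧ ∀ n, SplitsAt t v n fun k => y k n := by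
  rw [mem_winningShift_iff]
  constructor
  · rintro ⟨y, hy, hX⟩
    exact ⟨fun k => y (scatter t k), fun k => hX _ (scatter_mono t k.2), hy.splitsAt ht⟩
  · rintro ⟨y, hX, hy⟩
    exact ⟨_, isBranchFamily_of_splitsAt ht hy, fun s _ => hX _⟩

end Scatter

section OrbitClosure

variable {C : Type*} {x : ℕ → C}

theorem exists_forall_mem_orbitClosure_iff {κ : Type*} [Finite κ] (hx : (Set.range x).Finite)
    (Q : ℕ → (κ → C) → Prop) :
    (∃ y : κ → ℕ → C, (∀ k, y k ∈ orbitClosure x) ∧ ∀ n, Q n fun k => y k n) ↔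
      ∀ N, ∃ p : κ → ℕ, ∀ n < N, Q n fun k => x (p k + n) := by
  constructor
  · rintro ⟨y, hmem, hQ⟩ N
    choose p hp using fun k => hmem k N
    refine ⟨p, fun n hn => ?_⟩
    simpa only [← hp _ n hn] using hQ n
  · intro h
    choose p hp using h
    -- As `x` takes finitely many values, the words `x (p N k + ·)` converge along an ultrafilter.
    let U := Filter.hyperfilter ℕ
    have hlim (k : κ) (n : ℕ) : ∃ c, ∀ᶠ N in U, c = x (p N k + n) := by
      obtain ⟨c, -, hc⟩ := (Ultrafilter.finite_biUnion_mem_iff (f := U) hx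
        (s := fun c => {N | c = x (p N k + n)})).1
        (Filter.Eventually.of_forall fun N => Set.mem_biUnion ⟨_, rfl⟩ rfl)
      exact ⟨c, hc⟩
    choose y hy using hlim
    refine ⟨y, fun k N => ?_, fun n => ?_⟩
    · obtain ⟨M, hM⟩ := ((Filter.eventually_all_finite (Set.finite_Iio N)).2
        fun i _ => hy k i).exists
      exact ⟨p M k, hM⟩
    · have hlarge : ∀ᶠ N in U, n < N :=
        Nat.hyperfilter_le_atTop (Filter.eventually_gt_atTop n)
      obtain ⟨N, hN, heq⟩ := (hlarge.and (Filter.eventually_all.2 fun k => hy k n)).exists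
      simpa only [heq] using hp N n hN

theorem scatter_mem_winningShift_orbitClosure_iff {ι : Type*} [Fintype ι] {t v : ι → ℕ}
    (ht : Function.Injective t) (hx : (Set.range x).Finite) :
    scatter t v ∈ winningShift (orbitClosure x) ↔
      ∀ N, ∃ p : Set.Iic v → ℕ, ∀ n < N, SplitsAt t v n fun k => x (p k + n) := by
  have : Finite (Set.Iic v) := finite_Iic_of_pi_nat v
  rw [scatter_mem_winningShift_iff ht]
  exact exists_forall_mem_orbitClosure_iff hx (SplitsAt t v)

end OrbitClosure

theorem SAutomatic.definable_forall_exists_splitsAt {A C ι : Type*} [Finite ι] {S : ANS A}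
    {x : ℕ → C} (hx : SAutomatic S x) (hadd : S.Addable) (v : ι → ℕ) :
    S.Definable fun t : ι → ℕ =>
      ∀ N, ∃ p : Set.Iic v → ℕ, ∀ n < N, SplitsAt t v n fun k => x (p k + n) := by
  have : Finite (Set.Iic v) := finite_Iic_of_pi_nat v
  open ANS.Definable in
  exact forall_nat hadd <| exists_tuple hadd <| forall_nat hadd <|
    (hadd.definable_lt _ _).imp <| forall_finite fun k => forall_finite fun k' =>
      (forall_finite fun i => (hadd.definable_lt _ _).imp (const S _)).imp <|
        (hx.definable_apply_add_eq_apply_add hadd _ _ _).iff <|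
          forall_finite fun i => (hadd.definable_eq _ _).imp (const S _)

theorem ANS.Addable.definable_strictMono {A ι : Type*} [Finite ι] [Preorder ι] {S : ANS A}
    (hadd : S.Addable) : S.Definable fun t : ι → ℕ => StrictMono t :=
  Definable.forall_finite fun i => Definable.forall_finite fun j =>
    (Definable.const S (i < j)).imp (hadd.definable_lt i j)

theorem P111_eq_PvSet (Y : Set (ℕ → ℕ)) : P111 Y = PvSet [1, 1, 1] Y := by
  ext t
  have hmono : StrictMono t ↔ t 0 < t 1 ∧ t 1 < t 2 := by
    simp [Fin.strictMono_iff_lt_succ, Fin.forall_fin_two]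
  change t 0 < t 1 ∧ t 1 < t 2 ∧ _ ∈ Y ↔ StrictMono t ∧ _ ∈ Y
  rw [hmono, and_assoc]
  refine and_congr_right fun h01 => and_congr_right fun h12 => iff_of_eq (congrArg (· ∈ Y) ?_)
  ext j
  change _ = ∑ i : Fin 3, if t i = j then [1, 1, 1].get i else 0
  rw [Fin.sum_univ_three]
  grind

theorem stmt2_general {A C : Type*} (S : ANS A) (hadd : S.Addable) (v : List ℕ) (x : ℕ → C)
    (hx : SAutomatic S x) : S.Recognizable (PvSet v (winningShift (orbitClosure x))) := by
  refine ANS.Definable.recognizable hadd (.congr (hadd.definable_strictMono.and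
    (hx.definable_forall_exists_splitsAt hadd v.get)) fun t => and_congr_right fun hmono => ?_)
  exact (scatter_mem_winningShift_orbitClosure_iff hmono.injective hx.finite_range).symm

/-- If `S` is an addable ANS and `x ∈ {0,1}^ℕ` is `S`-automatic, then
`P_{111}(W(O(x))) ⊆ ℕ³` is `S`-recognizable. -/
theorem stmt2 {A : Type} [Fintype A] (S : ANS A) (hadd : S.Addable)
    (x : ℕ → Bool) (hx : SAutomatic S x) :
    S.Recognizable (P111 (winningShift (orbitClosure x))) := by
  rw [P111_eq_PvSet]
  exact stmt2_general S hadd [1, 1, 1] x hx
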